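/- Let g be the heat kernel on the flat torus D = [0,2π]². For every β ∈ (0, 4/3) there exists C_β > 0 such that for all s > 0 and x ∈ D: ∫_D |∇_y g(s,x,y)|^β dy ≤ C_β s^{-3β/2 + 1}. -/

import Mathlib

open Real MeasureTheory

/-- The heat kernel on the flat torus `[0,2π]²`, given by the method of images. -/
noncomputable def torusHeatKernel (t : ℝ) (x y : ℝ × ℝ) : ℝ :=
  (1 / (4 * π * t)) * ∑' k : ℤ × ℤ,
    Real.exp (-((x.1 - y.1 + 2 * π * k.1) ^ 2 + (x.2 - y.2 + 2 * π * k.2) ^ 2) / (4 * t))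

/-!
The lattice sum factors, so `g(t,x,y)` is `1 / (4πt)` times a product of two theta functions
`HurwitzZeta.evenKernel a (π / t)` with `a = (xᵢ - yᵢ) / (2π)`, and the derivative of such a factor
is a multiple of `HurwitzZeta.oddKernel a (π / t)`. Extracting part of the exponent from each term
of these sums leaves a Gaussian in the distance to the nearest lattice point. The remaining sums
are controlled for large `t` by the functional equations of the two kernels, the one for `oddKernel`
having no constant Fourier mode. This gives, uniformly in `t > 0`,
`|∇_y g(t,x,y)| ≤ C t ^ (-3/2) exp (-d(x,y)² / (16 t))` with `d` the distance on the torus;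
integrating the `β`-th power of this Gaussian contributes the factor `t`.
-/

open HurwitzZeta

section ThetaKernels

variable {x y : ℝ}

lemma evenKernel_pos (a : UnitAddCircle) (hx : 0 < x) : 0 < evenKernel a x := by
  induction a using QuotientAddGroup.induction_on with | H a =>
  have h := hasSum_int_evenKernel a hx
  exact h.tsum_eq ▸ h.summable.tsum_pos (fun _ => (exp_pos _).le) 0 (exp_pos _)

lemma evenKernel_le_exp_mul (a : UnitAddCircle) (hy : 0 < y) (hyx : y ≤ x) :
    evenKernel a x ≤ exp (-π * ‖a‖ ^ 2 * (x - y)) * evenKernel a y := by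
  induction a using QuotientAddGroup.induction_on with | H a =>
  refine hasSum_le (fun n => ?_) (hasSum_int_evenKernel a (hy.trans_le hyx))
    ((hasSum_int_evenKernel a hy).mul_left _)
  have hnorm : ‖(a : UnitAddCircle)‖ ≤ |n + a| := by
    have hna : ((n + a : ℝ) : UnitAddCircle) = a := by
      rw [AddCircle.coe_add, add_eq_right, AddCircle.coe_eq_zero_iff]
      exact ⟨n, by simp⟩
    exact hna ▸ QuotientAddGroup.norm_mk_le_norm
  have hsq : ‖(a : UnitAddCircle)‖ ^ 2 * (x - y) ≤ (n + a) ^ 2 * (x - y) := by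
    have := sub_nonneg.2 hyx
    rw [← sq_abs (n + a : ℝ)]
    gcongr
  rw [← exp_add, exp_le_exp]
  nlinarith [pi_pos]

lemma evenKernel_anti (a : UnitAddCircle) (hy : 0 < y) (hyx : y ≤ x) :
    evenKernel a x ≤ evenKernel a y := by
  refine (evenKernel_le_exp_mul a hy hyx).trans
    (mul_le_of_le_one_left (evenKernel_pos a hy).le (exp_le_one_iff.2 ?_))
  have := mul_nonneg (mul_nonneg pi_pos.le (sq_nonneg ‖a‖)) (sub_nonneg.2 hyx)
  linarith

lemma evenKernel_eq_div_sqrt_mul_cosKernel (a : UnitAddCircle) (x : ℝ) :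
    evenKernel a x = 1 / √x * cosKernel a (1 / x) := by
  rw [evenKernel_functional_equation, sqrt_eq_rpow]

lemma cosKernel_le_cosKernel_zero (a : UnitAddCircle) (hx : 0 < x) :
    cosKernel a x ≤ cosKernel 0 x := by
  induction a using QuotientAddGroup.induction_on with | H a =>
  have hzero : HasSum (fun n : ℤ => exp (-π * n ^ 2 * x)) (cosKernel 0 x) := by
    simpa [← evenKernel_eq_cosKernel_of_zero] using hasSum_int_evenKernel 0 hx
  refine (le_abs_self _).trans ?_
  rw [← norm_eq_abs, ← Complex.norm_real, ← (hasSum_int_cosKernel a hx).tsum_eq]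
  refine tsum_of_norm_bounded hzero fun n => ?_
  have hphase : 2 * π * Complex.I * a * n = ((2 * π * a * n : ℝ) : ℂ) * Complex.I := by
    push_cast
    ring
  rw [norm_mul, hphase, Complex.norm_exp_ofReal_mul_I, one_mul, Complex.norm_real,
    norm_of_nonneg (exp_pos _).le]

lemma evenKernel_le_evenKernel_zero (a : UnitAddCircle) (hx : 0 < x) :
    evenKernel a x ≤ evenKernel 0 x := by
  rw [evenKernel_eq_div_sqrt_mul_cosKernel a, evenKernel_eq_div_sqrt_mul_cosKernel 0]
  gcongr
  exact cosKernel_le_cosKernel_zero a (by positivity)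

lemma evenKernel_zero_le (hx : 0 < x) :
    evenKernel 0 x ≤ evenKernel 0 1 * (1 + 1 / √x) := by
  have hpos := evenKernel_pos 0 one_pos
  rcases le_total 1 x with h1 | h1
  · refine (evenKernel_anti 0 one_pos h1).trans (le_mul_of_one_le_right hpos.le ?_)
    exact le_add_of_nonneg_right (by positivity)
  · calc evenKernel 0 x = 1 / √x * evenKernel 0 (1 / x) := by
          rw [evenKernel_eq_div_sqrt_mul_cosKernel, ← evenKernel_eq_cosKernel_of_zero]
      _ ≤ 1 / √x * evenKernel 0 1 := by
          gcongr
          exact evenKernel_anti 0 one_pos ((one_le_div hx).2 h1)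
      _ ≤ evenKernel 0 1 * (1 + 1 / √x) := by linarith

lemma evenKernel_le_gaussian (a : UnitAddCircle) (hx : 0 < x) :
    evenKernel a x ≤ 2 * evenKernel 0 1 * (1 + 1 / √x) * exp (-(π / 4) * x * ‖a‖ ^ 2) := by
  have hx4 : 0 < x / 4 := by positivity
  have hsqrt : √(x / 4) = √x / 2 := by
    rw [sqrt_div hx.le, show (4 : ℝ) = 2 ^ 2 by norm_num, sqrt_sq two_pos.le]
  have hpos := evenKernel_pos 0 one_pos
  calc evenKernel a x
      ≤ exp (-π * ‖a‖ ^ 2 * (x - x / 4)) * evenKernel a (x / 4) :=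
        evenKernel_le_exp_mul a hx4 (by linarith)
    _ ≤ exp (-(π / 4) * x * ‖a‖ ^ 2) * (evenKernel 0 1 * (1 + 1 / √(x / 4))) := by
        refine mul_le_mul (exp_le_exp.2 ?_) ?_ (evenKernel_pos a hx4).le (exp_pos _).le
        · nlinarith [mul_nonneg (mul_nonneg pi_pos.le hx.le) (sq_nonneg ‖a‖)]
        · exact (evenKernel_le_evenKernel_zero a hx4).trans (evenKernel_zero_le hx4)
    _ = evenKernel 0 1 * (1 + 2 * (1 / √x)) * exp (-(π / 4) * x * ‖a‖ ^ 2) := by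
        rw [hsqrt]
        field_simp
    _ ≤ 2 * evenKernel 0 1 * (1 + 1 / √x) * exp (-(π / 4) * x * ‖a‖ ^ 2) := by
        gcongr ?_ * _
        linarith

lemma abs_mul_exp_neg_mul_sq_le (hx : 0 < x) (w : ℝ) :
    |w| * exp (-π * w ^ 2 * x) ≤ 1 / √x * exp (-π * w ^ 2 * (x / 2)) := by
  have := sqrt_pos.2 hx
  have hle : √x * |w| ≤ exp (π * w ^ 2 * (x / 2)) := by
    refine le_trans ?_ (add_one_le_exp _)
    nlinarith [sq_nonneg (√x * |w| - 1), sq_abs w, sq_sqrt hx.le, pi_gt_three,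
      mul_nonneg hx.le (sq_nonneg w)]
  calc |w| * exp (-π * w ^ 2 * x)
      = 1 / √x * (√x * |w|) * exp (-π * w ^ 2 * x) := by field_simp
    _ ≤ 1 / √x * exp (π * w ^ 2 * (x / 2)) * exp (-π * w ^ 2 * x) := by gcongr
    _ = 1 / √x * exp (-π * w ^ 2 * (x / 2)) := by
        rw [mul_assoc, ← exp_add]
        ring_nf

lemma abs_oddKernel_le_evenKernel (a : UnitAddCircle) (hx : 0 < x) :
    |oddKernel a x| ≤ 1 / √x * evenKernel a (x / 2) := by
  induction a using QuotientAddGroup.induction_on with | H a =>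
  rw [← (hasSum_int_oddKernel a hx).tsum_eq, ← norm_eq_abs]
  refine tsum_of_norm_bounded ((hasSum_int_evenKernel a (half_pos hx)).mul_left _) fun n => ?_
  rw [norm_mul, norm_of_nonneg (exp_pos _).le, norm_eq_abs]
  exact abs_mul_exp_neg_mul_sq_le hx _

lemma abs_intCast_mul_exp_neg_mul_sq_le (hx : 0 < x) (n : ℤ) :
    |(n : ℝ)| * exp (-π * n ^ 2 * x) ≤ 2 / x ^ 2 * exp (-π * n ^ 2 * (x / 2)) := by
  have hn : |(n : ℝ)| ≤ ((n : ℝ) ^ 2) ^ 2 := by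
    have := (Int.abs_eq_natAbs n).trans_le (Int.natAbs_le_self_sq n)
    exact_mod_cast this.trans (Int.le_self_sq _)
  have hw : (n ^ 2 * x) ^ 2 ≤ 2 * exp (n ^ 2 * x) := by
    have := pow_div_factorial_le_exp (n ^ 2 * x) (by positivity) 2
    norm_num at this
    linarith
  calc |(n : ℝ)| * exp (-π * n ^ 2 * x)
      ≤ ((n : ℝ) ^ 2) ^ 2 * exp (-π * n ^ 2 * x) := by gcongr
    _ = 1 / x ^ 2 * (n ^ 2 * x) ^ 2 * exp (-π * n ^ 2 * x) := by field_simp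
    _ ≤ 1 / x ^ 2 * (2 * exp (n ^ 2 * x)) * exp (-π * n ^ 2 * x) := by gcongr
    _ = 2 / x ^ 2 * exp (n ^ 2 * x - π * n ^ 2 * x) := by
        rw [sub_eq_add_neg, exp_add]
        ring_nf
    _ ≤ 2 / x ^ 2 * exp (-π * n ^ 2 * (x / 2)) := by
        gcongr
        nlinarith [pi_gt_three, mul_nonneg (sq_nonneg (n : ℝ)) hx.le]

lemma abs_sinKernel_le (a : UnitAddCircle) (hx : 0 < x) :
    |sinKernel a x| ≤ 2 / x ^ 2 * evenKernel 0 (x / 2) := by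
  induction a using QuotientAddGroup.induction_on with | H a =>
  have hzero : HasSum (fun n : ℤ => exp (-π * n ^ 2 * (x / 2))) (evenKernel 0 (x / 2)) := by
    simpa using hasSum_int_evenKernel 0 (half_pos hx)
  rw [← norm_eq_abs, ← Complex.norm_real, ← (hasSum_int_sinKernel a hx).tsum_eq]
  refine tsum_of_norm_bounded (hzero.mul_left _) fun n => ?_
  have hphase : 2 * π * Complex.I * a * n = ((2 * π * a * n : ℝ) : ℂ) * Complex.I := by
    push_cast
    ring
  rw [norm_mul, norm_mul, norm_mul, hphase, Complex.norm_exp_ofReal_mul_I, norm_neg,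
    Complex.norm_I, one_mul, mul_one, Complex.norm_real, norm_of_nonneg (exp_pos _).le,
    Complex.norm_intCast]
  exact abs_intCast_mul_exp_neg_mul_sq_le hx n

lemma abs_oddKernel_le_sqrt_mul (a : UnitAddCircle) (hx : 0 < x) :
    |oddKernel a x| ≤ 2 * √x * evenKernel 0 (1 / (2 * x)) := by
  have hpow : x ^ (3 / 2 : ℝ) = x * √x := by
    rw [sqrt_eq_rpow, ← rpow_one_add' hx.le (by norm_num)]
    norm_num
  rw [oddKernel_functional_equation, hpow, abs_mul, abs_of_nonneg (by positivity)]
  calc 1 / (x * √x) * |sinKernel a (1 / x)|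
      ≤ 1 / (x * √x) * (2 / (1 / x) ^ 2 * evenKernel 0 (1 / x / 2)) := by
        gcongr
        exact abs_sinKernel_le a (by positivity)
    _ = 2 * √x * evenKernel 0 (1 / (2 * x)) := by
        rw [div_div, mul_comm x 2]
        field_simp
        rw [sq_sqrt hx.le]

lemma abs_oddKernel_le_gaussian (a : UnitAddCircle) (hx : 0 < x) :
    |oddKernel a x| ≤
      8 * evenKernel 0 (1 / 4) * (1 / (1 + √x)) * exp (-(π / 4) * x * ‖a‖ ^ 2) := by
  have hs := sqrt_pos.2 hx
  have hpos : 0 < evenKernel 0 (1 / 4) := evenKernel_pos 0 (by norm_num)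
  rcases le_total 1 x with h1 | h1
  · have hx4 : 0 < x / 4 := by positivity
    have hs1 : 1 ≤ √x := one_le_sqrt.2 h1
    calc |oddKernel a x| ≤ 1 / √x * evenKernel a (x / 2) := abs_oddKernel_le_evenKernel a hx
      _ ≤ 1 / √x * (exp (-π * ‖a‖ ^ 2 * (x / 2 - x / 4)) * evenKernel a (x / 4)) := by
          gcongr
          exact evenKernel_le_exp_mul a hx4 (by linarith)
      _ ≤ 8 * (1 / (1 + √x)) *
            (exp (-π * ‖a‖ ^ 2 * (x / 2 - x / 4)) * evenKernel 0 (1 / 4)) := by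
          have := (evenKernel_pos a hx4).le
          gcongr
          · rw [mul_one_div, div_le_div_iff₀ hs (by positivity)]
            linarith
          · exact (evenKernel_le_evenKernel_zero a hx4).trans
              (evenKernel_anti 0 (by norm_num) (by linarith))
      _ = 8 * evenKernel 0 (1 / 4) * (1 / (1 + √x)) * exp (-(π / 4) * x * ‖a‖ ^ 2) := by
          ring_nf
  · have hs1 : √x ≤ 1 := sqrt_le_one.2 h1
    have hexp : 1 / 2 ≤ exp (-(π / 4) * x * ‖a‖ ^ 2) := by
      have hnorm : ‖a‖ ^ 2 ≤ (1 / 2) ^ 2 := by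
        gcongr
        simpa using AddCircle.norm_le_half_period (1 : ℝ) one_ne_zero (x := a)
      have hprod : x * ‖a‖ ^ 2 ≤ 1 * (1 / 2) ^ 2 := by gcongr
      refine le_trans ?_ (add_one_le_exp _)
      nlinarith [pi_lt_four, pi_pos]
    calc |oddKernel a x| ≤ 2 * √x * evenKernel 0 (1 / (2 * x)) := abs_oddKernel_le_sqrt_mul a hx
      _ ≤ 2 * 1 * evenKernel 0 (1 / 4) := by
          have := (evenKernel_pos 0 (show 0 < 1 / (2 * x) by positivity)).le
          gcongr
          refine evenKernel_anti 0 (by norm_num) ?_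
          gcongr
          linarith
      _ = 8 * evenKernel 0 (1 / 4) * (1 / 2) * (1 / 2) := by ring
      _ ≤ 8 * evenKernel 0 (1 / 4) * (1 / (1 + √x)) * exp (-(π / 4) * x * ‖a‖ ^ 2) := by
          gcongr
          linarith

lemma exists_abs_oddKernel_mul_evenKernel_le :
    ∃ M : ℝ, 0 < M ∧ ∀ x : ℝ, 0 < x → ∀ a b : UnitAddCircle,
      |oddKernel a x| * evenKernel b x ≤
        M * (1 / √x) * exp (-(π / 4) * x * (‖a‖ ^ 2 + ‖b‖ ^ 2)) := by
  have h₁ := evenKernel_pos 0 one_pos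
  have h₄ : 0 < evenKernel 0 (1 / 4) := evenKernel_pos 0 (by norm_num)
  refine ⟨8 * evenKernel 0 (1 / 4) * (2 * evenKernel 0 1), by positivity, fun x hx a b => ?_⟩
  have := sqrt_pos.2 hx
  refine (mul_le_mul (abs_oddKernel_le_gaussian a hx) (evenKernel_le_gaussian b hx)
    (evenKernel_pos b hx).le (by positivity)).trans_eq ?_
  rw [mul_add (-(π / 4) * x), exp_add]
  field_simp
  ring

lemma hasDerivAt_evenKernel (a : ℝ) (hx : 0 < x) :
    HasDerivAt (fun a : ℝ => evenKernel a x) (-2 * π * x * oddKernel a x) a := by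
  have htheta : HasDerivAt (fun z : ℂ => jacobiTheta₂ (z * Complex.I * x) (Complex.I * x))
      (jacobiTheta₂' (a * Complex.I * x) (Complex.I * x) * (Complex.I * x)) a := by
    refine (hasDerivAt_jacobiTheta₂_fst (a * Complex.I * x) (by simpa)).comp
      (h := fun z : ℂ => z * Complex.I * x) (a : ℂ) ?_
    simpa [mul_assoc] using (hasDerivAt_id (a : ℂ)).mul_const (Complex.I * x)
  have hexp : HasDerivAt (fun z : ℂ => Complex.exp (-π * z ^ 2 * x))
      (Complex.exp (-π * a ^ 2 * x) * (-π * (2 * a) * x)) a := by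
    simpa using ((((hasDerivAt_pow 2 (a : ℂ)).const_mul (-π : ℂ)).mul_const (x : ℂ)).cexp)
  have hreal := (hexp.mul htheta).real_of_complex
  refine hreal.congr_deriv ?_ |>.congr_of_eventuallyEq (.of_forall fun b => ?_)
  · rw [← Complex.ofReal_re (-2 * π * x * oddKernel a x)]
    push_cast [oddKernel_def']
    congr 1
    field_simp
    ring_nf
    rw [Complex.I_sq]
    ring
  · simp only [Pi.mul_apply, ← evenKernel_def, Complex.ofReal_re]

end ThetaKernels

section Gradient

variable {t : ℝ}

lemma torusHeatKernel_eq_evenKernel (ht : 0 < t) (x y : ℝ × ℝ) :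
    torusHeatKernel t x y = 1 / (4 * π * t) *
      (evenKernel ((x.1 - y.1) / (2 * π) : ℝ) (π / t) *
        evenKernel ((x.2 - y.2) / (2 * π) : ℝ) (π / t)) := by
  have hx : 0 < π / t := by positivity
  have h₁ := hasSum_int_evenKernel ((x.1 - y.1) / (2 * π)) hx
  have h₂ := hasSum_int_evenKernel ((x.2 - y.2) / (2 * π)) hx
  rw [torusHeatKernel, ← h₁.tsum_eq, ← h₂.tsum_eq,
    tsum_mul_tsum_of_summable_norm h₁.summable.norm h₂.summable.norm]
  congr 1
  refine tsum_congr fun k => ?_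
  rw [← exp_add]
  congr 1
  field_simp
  ring

lemma hasFDerivAt_torusHeatKernel (ht : 0 < t) (x y : ℝ × ℝ) :
    HasFDerivAt (fun y => torusHeatKernel t x y)
      ((1 / (4 * t ^ 2)) •
        ((oddKernel ((x.1 - y.1) / (2 * π) : ℝ) (π / t) *
            evenKernel ((x.2 - y.2) / (2 * π) : ℝ) (π / t)) • ContinuousLinearMap.fst ℝ ℝ ℝ +
          (oddKernel ((x.2 - y.2) / (2 * π) : ℝ) (π / t) *
            evenKernel ((x.1 - y.1) / (2 * π) : ℝ) (π / t)) • ContinuousLinearMap.snd ℝ ℝ ℝ))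
      y := by
  have hx : 0 < π / t := by positivity
  have hfactor (u v : ℝ) : HasDerivAt
      (fun v : ℝ => evenKernel ((u - v) / (2 * π) : ℝ) (π / t))
      (π / t * oddKernel ((u - v) / (2 * π) : ℝ) (π / t)) v := by
    refine ((hasDerivAt_evenKernel ((u - v) / (2 * π)) hx).comp v
      (((hasDerivAt_id v).const_sub u).div_const (2 * π))).congr_deriv ?_
    field_simp
  have h₁ := (hfactor x.1 y.1).comp_hasFDerivAt y (ContinuousLinearMap.fst ℝ ℝ ℝ).hasFDerivAt
  have h₂ := (hfactor x.2 y.2).comp_hasFDerivAt y (ContinuousLinearMap.snd ℝ ℝ ℝ).hasFDerivAt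
  rw [funext fun y => torusHeatKernel_eq_evenKernel ht x y]
  refine ((h₁.mul h₂).const_mul (1 / (4 * π * t))).congr_fderiv ?_
  ext <;> simp <;> field_simp

lemma norm_coe_addCircle_two_pi (u : ℝ) :
    ‖(u : AddCircle (2 * π))‖ = 2 * π * ‖((u / (2 * π) : ℝ) : UnitAddCircle)‖ := by
  rw [AddCircle.norm_eq' _ two_pi_pos, UnitAddCircle.norm_eq, inv_mul_eq_div]

lemma norm_smul_fst_add_smul_snd_le (p q : ℝ) :
    ‖p • ContinuousLinearMap.fst ℝ ℝ ℝ + q • ContinuousLinearMap.snd ℝ ℝ ℝ‖ ≤ |p| + |q| := by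
  refine (norm_add_le _ _).trans ?_
  rw [norm_smul, norm_smul, norm_eq_abs, norm_eq_abs]
  exact add_le_add
    (mul_le_of_le_one_right (abs_nonneg p) (ContinuousLinearMap.norm_fst_le ℝ ℝ ℝ))
    (mul_le_of_le_one_right (abs_nonneg q) (ContinuousLinearMap.norm_snd_le ℝ ℝ ℝ))

lemma exists_norm_fderiv_torusHeatKernel_le :
    ∃ M : ℝ, 0 < M ∧ ∀ t : ℝ, 0 < t → ∀ x y : ℝ × ℝ,
      ‖fderiv ℝ (fun y => torusHeatKernel t x y) y‖ ≤ M * t ^ (-3 / 2 : ℝ) *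
        exp (-(1 / (16 * t)) * (‖((x.1 - y.1 : ℝ) : AddCircle (2 * π))‖ ^ 2 +
          ‖((x.2 - y.2 : ℝ) : AddCircle (2 * π))‖ ^ 2)) := by
  obtain ⟨M, hM, h⟩ := exists_abs_oddKernel_mul_evenKernel_le
  refine ⟨M / 2, half_pos hM, fun t ht x y => ?_⟩
  have hx : 0 < π / t := by positivity
  rw [(hasFDerivAt_torusHeatKernel ht x y).fderiv, norm_coe_addCircle_two_pi,
    norm_coe_addCircle_two_pi]
  set a : UnitAddCircle := ↑((x.1 - y.1) / (2 * π))
  set b : UnitAddCircle := ↑((x.2 - y.2) / (2 * π))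
  have hsqrt : 1 / √(π / t) ≤ √t := by
    rw [sqrt_div pi_pos.le, one_div_div]
    exact div_le_self (sqrt_nonneg t) (one_le_sqrt.2 (by linarith [pi_gt_three]))
  have hterm (a b : UnitAddCircle) : |oddKernel a (π / t) * evenKernel b (π / t)| ≤
      M * √t * exp (-(1 / (16 * t)) * ((2 * π * ‖a‖) ^ 2 + (2 * π * ‖b‖) ^ 2)) := by
    rw [abs_mul, abs_of_pos (evenKernel_pos b hx)]
    calc |oddKernel a (π / t)| * evenKernel b (π / t)
        ≤ M * (1 / √(π / t)) * exp (-(π / 4) * (π / t) * (‖a‖ ^ 2 + ‖b‖ ^ 2)) := h _ hx a b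
      _ ≤ M * √t * exp (-(π / 4) * (π / t) * (‖a‖ ^ 2 + ‖b‖ ^ 2)) := by gcongr
      _ = M * √t * exp (-(1 / (16 * t)) * ((2 * π * ‖a‖) ^ 2 + (2 * π * ‖b‖) ^ 2)) := by
          congr 2
          field_simp
          ring
  have hpow : t ^ (-3 / 2 : ℝ) = √t / t ^ 2 := by
    rw [sqrt_eq_rpow, ← rpow_natCast, ← rpow_sub ht]
    norm_num
  rw [norm_smul, norm_of_nonneg (by positivity), hpow]
  refine (mul_le_mul_of_nonneg_left ((norm_smul_fst_add_smul_snd_le _ _).trans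
    (add_le_add (hterm a b) (hterm b a))) (by positivity)).trans_eq ?_
  rw [add_comm ((2 * π * ‖b‖) ^ 2)]
  field_simp
  ring

end Gradient

section Integration

variable {T : ℝ} [hT : Fact (0 < T)] {b : ℝ}

lemma integral_exp_neg_mul_norm_sq_le (hb : 0 < b) :
    ∫ a : AddCircle T, exp (-b * ‖a‖ ^ 2) ≤ √(π / b) := by
  rw [← AddCircle.integral_preimage T (-(T / 2)), ← integral_gaussian b]
  calc ∫ u in Set.Ioc (-(T / 2)) (-(T / 2) + T), exp (-b * ‖(u : AddCircle T)‖ ^ 2)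
      = ∫ u in Set.Ioc (-(T / 2)) (-(T / 2) + T), exp (-b * u ^ 2) := by
        refine setIntegral_congr_fun measurableSet_Ioc fun u hu => ?_
        have habs : |u| ≤ |T| / 2 := by
          rw [abs_of_pos hT.out, abs_le]
          exact ⟨hu.1.le, by linarith [hu.2]⟩
        simp only [(AddCircle.norm_coe_eq_abs_iff T hT.out.ne').2 habs, sq_abs]
    _ ≤ ∫ u, exp (-b * u ^ 2) :=
        setIntegral_le_integral (integrable_exp_neg_mul_sq hb) (.of_forall fun _ => (exp_pos _).le)

lemma setIntegral_Icc_comp_coe_sub {E : Type*} [NormedAddCommGroup E] [NormedSpace ℝ E]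
    (f : AddCircle T → E) (x : ℝ) :
    ∫ y in Set.Icc 0 T, f ((x - y : ℝ) : AddCircle T) = ∫ a, f a := by
  rw [integral_Icc_eq_integral_Ioc, ← integral_sub_left_eq_self f volume (x : AddCircle T),
    ← AddCircle.integral_preimage T 0, zero_add]
  rfl

lemma setIntegral_exp_neg_mul_norm_sq_add_norm_sq_le (hb : 0 < b) (x : ℝ × ℝ) :
    ∫ y in Set.Icc ((0 : ℝ), (0 : ℝ)) (T, T),
      exp (-b * (‖((x.1 - y.1 : ℝ) : AddCircle T)‖ ^ 2 +
        ‖((x.2 - y.2 : ℝ) : AddCircle T)‖ ^ 2)) ≤ π / b := by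
  let f (a : AddCircle T) : ℝ := exp (-b * ‖a‖ ^ 2)
  have : 0 ≤ ∫ a, f a := integral_nonneg fun _ => (exp_pos _).le
  simp_rw [mul_add, exp_add]
  rw [← Set.Icc_prod_Icc, Measure.volume_eq_prod,
    setIntegral_prod_mul (fun u : ℝ => f ((x.1 - u : ℝ))) (fun u : ℝ => f ((x.2 - u : ℝ))),
    setIntegral_Icc_comp_coe_sub, setIntegral_Icc_comp_coe_sub]
  calc (∫ a, f a) * ∫ a, f a ≤ √(π / b) * √(π / b) := by
        gcongr <;> exact integral_exp_neg_mul_norm_sq_le hb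
    _ = π / b := mul_self_sqrt (by positivity)

end Integration

theorem torusHeatKernel_grad_Lbeta_bound_general {β : ℝ} (hβ : 0 < β) :
    ∃ C : ℝ, 0 < C ∧ ∀ s : ℝ, 0 < s → ∀ x : ℝ × ℝ,
      (∫ y in Set.Icc ((0 : ℝ), (0 : ℝ)) (2 * π, 2 * π),
        ‖fderiv ℝ (fun y => torusHeatKernel s x y) y‖ ^ β)
        ≤ C * s ^ (-(3 * β) / 2 + 1) := by
  obtain ⟨M, hM, hgrad⟩ := exists_norm_fderiv_torusHeatKernel_le
  refine ⟨M ^ β * (16 * π / β), by positivity, fun s hs x => ?_⟩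
  have : Fact (0 < 2 * π) := ⟨two_pi_pos⟩
  let G (y : ℝ × ℝ) : ℝ := exp (-(β / (16 * s)) *
    (‖((x.1 - y.1 : ℝ) : AddCircle (2 * π))‖ ^ 2 + ‖((x.2 - y.2 : ℝ) : AddCircle (2 * π))‖ ^ 2))
  have hG : Continuous G := by
    have := AddCircle.continuous_mk' (2 * π)
    fun_prop
  have hbound (y : ℝ × ℝ) : ‖fderiv ℝ (fun y => torusHeatKernel s x y) y‖ ^ β ≤
      M ^ β * s ^ (-(3 * β) / 2) * G y := by
    refine (rpow_le_rpow (norm_nonneg _) (hgrad s hs x y) hβ.le).trans_eq ?_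
    rw [mul_rpow (by positivity) (exp_pos _).le, mul_rpow hM.le (by positivity),
      ← rpow_mul hs.le, ← exp_mul]
    simp only [G]
    ring_nf
  calc ∫ y in Set.Icc ((0 : ℝ), (0 : ℝ)) (2 * π, 2 * π),
        ‖fderiv ℝ (fun y => torusHeatKernel s x y) y‖ ^ β
      ≤ ∫ y in Set.Icc ((0 : ℝ), (0 : ℝ)) (2 * π, 2 * π), M ^ β * s ^ (-(3 * β) / 2) * G y :=
        integral_mono_of_nonneg (.of_forall fun _ => by positivity)
          ((hG.const_mul _).continuousOn.integrableOn_compact isCompact_Icc)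
          (.of_forall hbound)
    _ ≤ M ^ β * s ^ (-(3 * β) / 2) * (π / (β / (16 * s))) := by
        rw [integral_const_mul]
        gcongr
        exact setIntegral_exp_neg_mul_norm_sq_add_norm_sq_le (by positivity) x
    _ = M ^ β * (16 * π / β) * s ^ (-(3 * β) / 2 + 1) := by
        rw [rpow_add_one hs.ne']
        field_simp

theorem torusHeatKernel_grad_Lbeta_bound (β : ℝ) (hβ : β ∈ Set.Ioo (0:ℝ) (4/3)) :
    ∃ C : ℝ, 0 < C ∧ ∀ s : ℝ, 0 < s →
      ∀ x ∈ Set.Icc ((0:ℝ), (0:ℝ)) (2 * π, 2 * π),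
      (∫ y in Set.Icc ((0:ℝ), (0:ℝ)) (2 * π, 2 * π),
        ‖fderiv ℝ (fun y => torusHeatKernel s x y) y‖ ^ β)
        ≤ C * s ^ (-(3 * β) / 2 + 1) := by
  obtain ⟨C, hC, h⟩ := torusHeatKernel_grad_Lbeta_bound_general hβ.1
  exact ⟨C, hC, fun s hs x _ => h s hs x⟩
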